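/- Let α, β, γ ∈ ℂ with none of α, β, γ a nonpositive integer, let δ, w ∈ ℂ, and let k ∈ (0,1). Define f_{m,n} and c_n as in the context. Then the coefficients c_n grow at most polynomially: there exist constants C > 0 and p ≥ 0 such that |c_n| ≤ C·(n+1)^p for all n ≥ 0. In particular, the power series Σ_{n=0}^{∞} c_n z^n converges for every complex z with |z| < 1. -/

import Mathlib

/-- The Pochhammer symbol `(x)_n = x(x+1)⋯(x+n-1)`. -/
noncomputable def poch (x : ℂ) (n : ℕ) : ℂ := ∏ i ∈ Finset.range n, (x + (i : ℂ))

/-- The index set of tuples `(ℓ_1, j_1, …, ℓ_m, j_m)` with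
`0 ≤ ℓ_1 ≤ j_1 < ℓ_2 ≤ j_2 < ⋯ < ℓ_m ≤ j_m < n`, encoded as pairs of functions
`(ℓ, j) : (Fin m → Fin n) × (Fin m → Fin n)`. -/
def heunIdx (m n : ℕ) : Finset ((Fin m → Fin n) × (Fin m → Fin n)) :=
  Finset.univ.filter fun p =>
    (∀ s : Fin m, (p.1 s : ℕ) ≤ (p.2 s : ℕ)) ∧
    (∀ s t : Fin m, (s : ℕ) + 1 = (t : ℕ) → (p.2 s : ℕ) < (p.1 t : ℕ))

/-- The coefficients `f_{m,n}`: `f_{0,n} = k^{2n}`; for `1 ≤ m ≤ n`,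
`f_{m,n} = (-1)^m k^{2n-2m} Σ ∏_{s=1}^m [j_s!(γ)_{j_s}(α)_{ℓ_s}(β)_{ℓ_s} /
(ℓ_s!(γ)_{ℓ_s}(α)_{j_s+1}(β)_{j_s+1})] k^{-2(j_s-ℓ_s)} (w - (1-k²)δℓ_s)`,
the sum running over `heunIdx m n`; and `f_{m,n} = 0` for `m < 0` or `m > n`. -/
noncomputable def heunf (k : ℝ) (α β γ δ w : ℂ) (m : ℤ) (n : ℕ) : ℂ :=
  if m = 0 then (k : ℂ) ^ (2 * n)
  else if m < 0 ∨ (n : ℤ) < m then 0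
  else (-1 : ℂ) ^ m.toNat * (k : ℂ) ^ (2 * (n : ℤ) - 2 * m) *
    ∑ p ∈ heunIdx m.toNat n, ∏ s : Fin m.toNat,
      ((Nat.factorial (p.2 s : ℕ) : ℂ) * poch γ (p.2 s : ℕ) * poch α (p.1 s : ℕ) *
          poch β (p.1 s : ℕ)) /
        ((Nat.factorial (p.1 s : ℕ) : ℂ) * poch γ (p.1 s : ℕ) * poch α ((p.2 s : ℕ) + 1) *
          poch β ((p.2 s : ℕ) + 1)) *
      (k : ℂ) ^ (-(2 : ℤ) * (((p.2 s : ℕ) : ℤ) - ((p.1 s : ℕ) : ℤ))) *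
      (w - (1 - (k : ℂ) ^ 2) * δ * ((p.1 s : ℕ) : ℂ))

/-- The Taylor coefficients `c_n = ((α)_n (β)_n / (n! (γ)_n)) Σ_{m=0}^n f_{m,n}`
of the local Heun solution. -/
noncomputable def heunc (k : ℝ) (α β γ δ w : ℂ) (n : ℕ) : ℂ :=
  poch α n * poch β n / ((Nat.factorial n : ℂ) * poch γ n) *
    ∑ m ∈ Finset.range (n + 1), heunf k α β γ δ w (m : ℤ) n

/-!
Summing over the last pair `(ℓ_m, j_m)` first turns the nested sums into the recurrence
`(n+1)(γ+n) c_{n+1} = k²(α+n)(β+n) c_n - ∑_{ℓ ≤ n} (w - (1-k²)δℓ) c_ℓ`.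
Dividing by `(n+1)(γ+n)`, which is of exact order `n²`, the coefficient of `c_n` is at most
`k²(1 + O(1/n))` and the weights in the sum are `O(1) + (1-k²)·O(ℓ)`, divided by `n²`. On the trial
sequence `(n+1)^p` the sum contributes at most `(1-k²)(n+1)^p + O((n+1)^(p-1))` once `p` is large,
because `∑_{ℓ < n} (ℓ+1)^(p+1) ≤ (n+1)^(p+2)/(p+2)`. The weights `k²` and `1-k²` add up to `1`, and
Bernoulli's inequality `(n+1)^p + p(n+1)^(p-1) ≤ (n+2)^p` absorbs the error terms.
-/

open Asymptotics Bornology Filter Finset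

section NestedSums

variable {R : Type*} [CommSemiring R]

/-- The sum of `∏ s, h (ℓ_s) (j_s)` over all `ℓ_1 ≤ j_1 < ℓ_2 ≤ ⋯ < ℓ_m ≤ j_m < n`, defined by
recursion on `m`, the last pair being the outermost summation. -/
def nestedSum (h : ℕ → ℕ → R) : ℕ → ℕ → R
  | 0, _ => 1
  | m + 1, n => ∑ j ∈ range n, ∑ l ∈ range (j + 1), h l j * nestedSum h m l

/-- The sum of `nestedSum h m n` over all chain lengths `m`; it is finite because there is no chain
of length `m > n`. -/
def totalNestedSum (h : ℕ → ℕ → R) (n : ℕ) : R :=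
  ∑ m ∈ range (n + 1), nestedSum h m n

lemma nestedSum_zero (h : ℕ → ℕ → R) (n : ℕ) : nestedSum h 0 n = 1 := by
  rw [nestedSum]

lemma nestedSum_succ_succ (h : ℕ → ℕ → R) (m n : ℕ) :
    nestedSum h (m + 1) (n + 1) =
      nestedSum h (m + 1) n + ∑ l ∈ range (n + 1), h l n * nestedSum h m l := by
  simp only [nestedSum, sum_range_succ _ n]

lemma nestedSum_eq_zero_of_lt (h : ℕ → ℕ → R) {m n : ℕ} (hnm : n < m) : nestedSum h m n = 0 := by
  induction m generalizing n with
  | zero => omega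
  | succ m ih =>
    rw [nestedSum]
    refine sum_eq_zero fun j hj => sum_eq_zero fun l hl => ?_
    rw [mem_range] at hj hl
    rw [ih (by omega), mul_zero]

lemma sum_range_nestedSum (h : ℕ → ℕ → R) {n M : ℕ} (hnM : n < M) :
    ∑ m ∈ range M, nestedSum h m n = totalNestedSum h n :=
  (sum_subset (range_subset_range.2 hnM) fun _ _ hm =>
    nestedSum_eq_zero_of_lt h (by rw [mem_range] at hm; omega)).symm

lemma totalNestedSum_zero (h : ℕ → ℕ → R) : totalNestedSum h 0 = 1 := by
  simp [totalNestedSum, nestedSum_zero]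

lemma totalNestedSum_succ (h : ℕ → ℕ → R) (n : ℕ) :
    totalNestedSum h (n + 1) =
      totalNestedSum h n + ∑ l ∈ range (n + 1), h l n * totalNestedSum h l := by
  have lengths_pos : ∑ m ∈ range (n + 1), ∑ l ∈ range (n + 1), h l n * nestedSum h m l =
      ∑ l ∈ range (n + 1), h l n * totalNestedSum h l := by
    rw [sum_comm]
    refine sum_congr rfl fun l hl => ?_
    rw [← mul_sum, sum_range_nestedSum h (mem_range.1 hl)]
  calc totalNestedSum h (n + 1)
      = ∑ m ∈ range (n + 1), (nestedSum h (m + 1) n +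
          ∑ l ∈ range (n + 1), h l n * nestedSum h m l) + nestedSum h 0 n := by
        simp only [totalNestedSum, sum_range_succ' _ (n + 1), nestedSum_succ_succ, nestedSum_zero]
    _ = ∑ m ∈ range (n + 2), nestedSum h m n +
          ∑ l ∈ range (n + 1), h l n * totalNestedSum h l := by
        rw [sum_add_distrib, lengths_pos, sum_range_succ' _ (n + 1), add_right_comm]
    _ = _ := by rw [sum_range_nestedSum h (by omega)]

end NestedSums

section IndexSet

/-- The index set `heunIdx m n` with natural number entries, so that index sets for different `n`
have a common type. -/
def natHeunIdx (m n : ℕ) : Finset ((Fin m → ℕ) × (Fin m → ℕ)) :=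
  (heunIdx m n).image fun p => (fun s => p.1 s, fun s => p.2 s)

lemma lt_of_interlaced {m : ℕ} {l j : Fin m → ℕ} (hlj : ∀ s, l s ≤ j s)
    (hjl : ∀ s t : Fin m, (s : ℕ) + 1 = t → j s < l t) {s t : Fin m} (hst : s < t) :
    j s < l t := by
  obtain ⟨t, ht⟩ := t
  replace hst : (s : ℕ) + 1 ≤ t := hst
  induction t, hst using Nat.le_induction with
  | base => exact hjl _ _ rfl
  | succ t _ ih =>
    exact (ih (by omega)).trans_le ((hlj _).trans (hjl ⟨t, by omega⟩ _ rfl).le)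

lemma mem_natHeunIdx {m n : ℕ} {p : (Fin m → ℕ) × (Fin m → ℕ)} :
    p ∈ natHeunIdx m n ↔
      (∀ s, p.1 s ≤ p.2 s) ∧ (∀ s t, s < t → p.2 s < p.1 t) ∧ ∀ s, p.2 s < n := by
  simp only [natHeunIdx, heunIdx, mem_image, mem_filter, mem_univ, true_and]
  constructor
  · rintro ⟨q, ⟨hlj, hjl⟩, rfl⟩
    exact ⟨hlj, fun _ _ => lt_of_interlaced hlj hjl, fun s => (q.2 s).2⟩
  · rintro ⟨hlj, hjl, hjn⟩
    exact ⟨(fun s => ⟨p.1 s, (hlj s).trans_lt (hjn s)⟩, fun s => ⟨p.2 s, hjn s⟩),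
      ⟨hlj, fun s t hst => hjl s t (Fin.lt_def.2 (by omega))⟩, rfl⟩

lemma mem_natHeunIdx_succ {m n : ℕ} {p : (Fin (m + 1) → ℕ) × (Fin (m + 1) → ℕ)} :
    p ∈ natHeunIdx (m + 1) n ↔
      (Fin.init p.1, Fin.init p.2) ∈ natHeunIdx m (p.1 (Fin.last m)) ∧
        p.1 (Fin.last m) ≤ p.2 (Fin.last m) ∧ p.2 (Fin.last m) < n := by
  simp only [mem_natHeunIdx, Fin.forall_fin_succ', Fin.init, Fin.castSucc_lt_castSucc_iff,
    Fin.castSucc_lt_last, lt_irrefl, not_lt_of_ge (Fin.le_last _), false_imp_iff, true_imp_iff,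
    and_true, implies_true]
  constructor
  · rintro ⟨⟨hlj, hlast⟩, hjl, -, hlast_lt⟩
    exact ⟨⟨hlj, fun s => (hjl s).1, fun s => (hjl s).2⟩, hlast, hlast_lt⟩
  · rintro ⟨⟨hlj, hjl, hj_last⟩, hlast, hlast_lt⟩
    exact ⟨⟨hlj, hlast⟩, fun s => ⟨hjl s, hj_last s⟩,
      fun s => ((hj_last s).trans_le hlast).trans hlast_lt, hlast_lt⟩

variable {R : Type*} [CommSemiring R]

lemma sum_natHeunIdx_prod (h : ℕ → ℕ → R) (m n : ℕ) :
    ∑ p ∈ natHeunIdx m n, ∏ s, h (p.1 s) (p.2 s) = nestedSum h m n := by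
  induction m generalizing n with
  | zero =>
    have : natHeunIdx 0 n = univ := by ext p; simp [mem_natHeunIdx]
    simp [this, nestedSum_zero]
  | succ m ih =>
    simp only [nestedSum, ← ih, mul_sum, sum_sigma']
    refine sum_bij'
      (fun p _ => ⟨p.2 (Fin.last m), p.1 (Fin.last m), Fin.init p.1, Fin.init p.2⟩)
      (fun q _ => (Fin.snoc (α := fun _ => ℕ) q.2.2.1 q.2.1,
        Fin.snoc (α := fun _ => ℕ) q.2.2.2 q.1)) ?_ ?_ ?_ ?_ ?_
    · intro p hp
      obtain ⟨hinit, hle, hlt⟩ := mem_natHeunIdx_succ.1 hp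
      simpa only [mem_sigma, mem_range, Nat.lt_succ_iff] using ⟨hlt, hle, hinit⟩
    · rintro ⟨j, l, p⟩ hq
      simp only [mem_sigma, mem_range, Nat.lt_succ_iff] at hq
      simpa only [mem_natHeunIdx_succ, Fin.init_snoc, Fin.snoc_last]
        using ⟨hq.2.2, hq.2.1, hq.1⟩
    · intro p _
      simp
    · rintro ⟨j, l, p⟩ _
      simp
    · intro p _
      rw [Fin.prod_univ_castSucc, mul_comm]
      rfl

lemma sum_heunIdx_prod (h : ℕ → ℕ → R) (m n : ℕ) :
    ∑ p ∈ heunIdx m n, ∏ s, h (p.1 s) (p.2 s) = nestedSum h m n := by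
  rw [← sum_natHeunIdx_prod, natHeunIdx, sum_image]
  intro p _ q _ hpq
  simp only [Prod.mk.injEq, funext_iff, Fin.val_inj] at hpq
  exact Prod.ext (funext hpq.1) (funext hpq.2)

end IndexSet

section Recurrence

variable {k : ℝ} {α β γ δ w : ℂ}

lemma poch_succ (x : ℂ) (n : ℕ) : poch x (n + 1) = poch x n * (x + n) :=
  prod_range_succ _ _

lemma poch_ne_zero {x : ℂ} (hx : ∀ j : ℕ, x ≠ -(j : ℂ)) (n : ℕ) : poch x n ≠ 0 :=
  prod_ne_zero_iff.2 fun i _ => mt eq_neg_of_add_eq_zero_left (hx i)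

/-- The term `(α)_n (β)_n / (n! (γ)_n) x^n` of the hypergeometric series `₂F₁(α, β; γ; x)`. -/
noncomputable def hypergeometricTerm (α β γ x : ℂ) (n : ℕ) : ℂ :=
  poch α n * poch β n / ((n.factorial : ℂ) * poch γ n) * x ^ n

/-- The weight for which `k^{2n} · nestedSum (heunWeight k α β γ δ w) m n` is `f_{m,n}`: the factor
of `f_{m,n}` attached to a pair `(ℓ, j)`, times the sign and the `k^{-2}` contributed by each pair
to the prefactor `(-1)^m k^{2n-2m}`. -/
noncomputable def heunWeight (k : ℝ) (α β γ δ w : ℂ) (l j : ℕ) : ℂ :=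
  -((k : ℂ) ^ 2)⁻¹ *
    (((j.factorial : ℂ) * poch γ j * poch α l * poch β l) /
        ((l.factorial : ℂ) * poch γ l * poch α (j + 1) * poch β (j + 1)) *
      (k : ℂ) ^ (-(2 : ℤ) * ((j : ℤ) - (l : ℤ))) *
      (w - (1 - (k : ℂ) ^ 2) * δ * (l : ℂ)))

lemma hypergeometricTerm_zero (α β γ x : ℂ) : hypergeometricTerm α β γ x 0 = 1 := by
  simp [hypergeometricTerm, poch]

lemma hypergeometricTerm_succ (hγ : ∀ j : ℕ, γ ≠ -(j : ℂ)) (α β x : ℂ) (n : ℕ) :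
    ((n : ℂ) + 1) * (γ + n) * hypergeometricTerm α β γ x (n + 1) =
      x * (α + n) * (β + n) * hypergeometricTerm α β γ x n := by
  have hn : (n : ℂ) + 1 ≠ 0 := n.cast_add_one_ne_zero
  have hγn : γ + n ≠ 0 := mt eq_neg_of_add_eq_zero_left (hγ n)
  simp only [hypergeometricTerm, poch_succ, Nat.factorial_succ, Nat.cast_mul, Nat.cast_succ,
    pow_succ]
  field_simp

lemma heunf_eq_nestedSum (hk : k ≠ 0) {m n : ℕ} (hmn : m ≤ n) :
    heunf k α β γ δ w m n = (k : ℂ) ^ (2 * n) * nestedSum (heunWeight k α β γ δ w) m n := by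
  have hkℂ : (k : ℂ) ≠ 0 := Complex.ofReal_ne_zero.2 hk
  rcases Nat.eq_zero_or_pos m with rfl | hm
  · simp [heunf, nestedSum_zero]
  · have hprefactor : (k : ℂ) ^ (2 * (n : ℤ) - 2 * m) =
        (k : ℂ) ^ (2 * n) * (((k : ℂ) ^ 2)⁻¹) ^ m := by
      rw [zpow_sub₀ hkℂ, inv_pow, ← pow_mul, div_eq_mul_inv]
      norm_cast
    rw [heunf, if_neg (by omega), if_neg (by omega), Int.toNat_natCast, ← sum_heunIdx_prod]
    simp only [heunWeight, prod_mul_distrib (f := fun _ => -((k : ℂ) ^ 2)⁻¹), prod_const,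
      card_univ, Fintype.card_fin]
    rw [← mul_sum, ← mul_assoc, hprefactor, neg_pow ((k : ℂ) ^ 2)⁻¹]
    ring

lemma heunc_eq_totalNestedSum (hk : k ≠ 0) (n : ℕ) :
    heunc k α β γ δ w n =
      hypergeometricTerm α β γ ((k : ℂ) ^ 2) n *
        totalNestedSum (heunWeight k α β γ δ w) n := by
  rw [heunc, hypergeometricTerm, totalNestedSum, mul_assoc, ← pow_mul]
  congr 1
  rw [mul_sum]
  exact sum_congr rfl fun m hm => heunf_eq_nestedSum hk (mem_range_succ_iff.1 hm)

lemma heunc_zero (hk : k ≠ 0) : heunc k α β γ δ w 0 = 1 := by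
  rw [heunc_eq_totalNestedSum hk, hypergeometricTerm_zero, totalNestedSum_zero, one_mul]

lemma hypergeometricTerm_succ_mul_heunWeight (hk : k ≠ 0) (hα : ∀ j : ℕ, α ≠ -(j : ℂ))
    (hβ : ∀ j : ℕ, β ≠ -(j : ℂ)) (hγ : ∀ j : ℕ, γ ≠ -(j : ℂ)) (l n : ℕ) :
    ((n : ℂ) + 1) * (γ + n) * hypergeometricTerm α β γ ((k : ℂ) ^ 2) (n + 1) *
        heunWeight k α β γ δ w l n =
      -((w - (1 - (k : ℂ) ^ 2) * δ * l) * hypergeometricTerm α β γ ((k : ℂ) ^ 2) l) := by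
  have hkℂ : (k : ℂ) ≠ 0 := Complex.ofReal_ne_zero.2 hk
  have hpow : (k : ℂ) ^ (-(2 : ℤ) * ((n : ℤ) - l)) = (k : ℂ) ^ (2 * l) / (k : ℂ) ^ (2 * n) := by
    rw [← zpow_natCast, ← zpow_natCast, ← zpow_sub₀ hkℂ]
    congr 1
    push_cast
    ring
  have hαn : α + n ≠ 0 := mt eq_neg_of_add_eq_zero_left (hα n)
  have hβn : β + n ≠ 0 := mt eq_neg_of_add_eq_zero_left (hβ n)
  have hn_fac : (n.factorial : ℂ) ≠ 0 := Nat.cast_ne_zero.2 n.factorial_ne_zero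
  have hα_poch := poch_ne_zero hα n
  have hβ_poch := poch_ne_zero hβ n
  have hγ_poch := poch_ne_zero hγ n
  rw [hypergeometricTerm_succ hγ, heunWeight, hpow]
  simp only [hypergeometricTerm, poch_succ, ← pow_mul]
  field_simp

lemma heunc_succ (hk : k ≠ 0) (hα : ∀ j : ℕ, α ≠ -(j : ℂ)) (hβ : ∀ j : ℕ, β ≠ -(j : ℂ))
    (hγ : ∀ j : ℕ, γ ≠ -(j : ℂ)) (n : ℕ) :
    ((n : ℂ) + 1) * (γ + n) * heunc k α β γ δ w (n + 1) =
      (k : ℂ) ^ 2 * (α + n) * (β + n) * heunc k α β γ δ w n -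
        ∑ l ∈ range (n + 1), (w - (1 - (k : ℂ) ^ 2) * δ * l) * heunc k α β γ δ w l := by
  set a := hypergeometricTerm α β γ ((k : ℂ) ^ 2)
  set h := heunWeight k α β γ δ w
  set F := totalNestedSum h
  calc ((n : ℂ) + 1) * (γ + n) * heunc k α β γ δ w (n + 1)
      = ((n : ℂ) + 1) * (γ + n) * a (n + 1) * F n +
          ∑ l ∈ range (n + 1), ((n : ℂ) + 1) * (γ + n) * a (n + 1) * h l n * F l := by
        rw [heunc_eq_totalNestedSum hk, totalNestedSum_succ, ← mul_assoc, mul_add, mul_sum]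
        simp only [F, h, a, mul_assoc]
    _ = (k : ℂ) ^ 2 * (α + n) * (β + n) * a n * F n +
          ∑ l ∈ range (n + 1), -((w - (1 - (k : ℂ) ^ 2) * δ * l) * a l) * F l := by
        simp only [a, h, hypergeometricTerm_succ_mul_heunWeight hk hα hβ hγ]
        rw [hypergeometricTerm_succ hγ]
    _ = _ := by
        simp only [heunc_eq_totalNestedSum hk, neg_mul, sum_neg_distrib, sub_eq_add_neg, mul_assoc,
          a, F, h]

end Recurrence

section Growth

lemma succ_mul_sum_range_pow_le (q n : ℕ) :
    ((q : ℝ) + 1) * ∑ l ∈ range n, ((l : ℝ) + 1) ^ q ≤ ((n : ℝ) + 1) ^ (q + 1) := by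
  induction n with
  | zero => simp
  | succ n ih =>
    have bernoulli : ((n : ℝ) + 1) ^ (q + 1) + (q + 1) * ((n : ℝ) + 1) ^ q ≤
        ((n : ℝ) + 1 + 1) ^ (q + 1) := by
      simpa using pow_add_mul_le_add_pow (a := (n : ℝ) + 1) (b := 1) (by positivity)
        (by positivity) (q + 1)
    rw [sum_range_succ, mul_add]
    push_cast
    linarith

lemma mul_sum_range_succ_pow_le {D : ℝ} {p : ℕ} (hDp : D ≤ p) (n : ℕ) :
    D * ∑ l ∈ range (n + 1), ((l : ℝ) + 1) ^ (p + 1) ≤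
      ((n : ℝ) + 1) ^ (p + 2) + D * ((n : ℝ) + 1) ^ (p + 1) := by
  rw [sum_range_succ, mul_add]
  gcongr
  refine le_trans ?_ (succ_mul_sum_range_pow_le (p + 1) n)
  gcongr
  push_cast
  linarith

lemma sum_affine_mul_pow_le {B D θ : ℝ} (hB : 0 ≤ B) (hθ : 0 ≤ θ) {p : ℕ}
    (hDp : D ≤ p) (n : ℕ) :
    ∑ l ∈ range (n + 1), (B + θ * D * (l + 1)) * ((l : ℝ) + 1) ^ p ≤
      ((n : ℝ) + 1) ^ (p + 2) * (θ + (B + θ * D) / (n + 1)) := by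
  have hsum : ∑ l ∈ range (n + 1), ((l : ℝ) + 1) ^ p ≤ ((n : ℝ) + 1) ^ (p + 1) := by
    calc ∑ l ∈ range (n + 1), ((l : ℝ) + 1) ^ p
        ≤ ∑ _l ∈ range (n + 1), ((n : ℝ) + 1) ^ p := by
          gcongr with l hl
          exact mem_range_succ_iff.1 hl
      _ = ((n : ℝ) + 1) ^ (p + 1) := by simp [pow_succ']
  calc ∑ l ∈ range (n + 1), (B + θ * D * (l + 1)) * ((l : ℝ) + 1) ^ p
      = B * ∑ l ∈ range (n + 1), ((l : ℝ) + 1) ^ p +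
          θ * (D * ∑ l ∈ range (n + 1), ((l : ℝ) + 1) ^ (p + 1)) := by
        simp only [mul_sum, ← sum_add_distrib]
        exact sum_congr rfl fun l _ => by ring
    _ ≤ B * ((n : ℝ) + 1) ^ (p + 1) +
          θ * (((n : ℝ) + 1) ^ (p + 2) + D * ((n : ℝ) + 1) ^ (p + 1)) := by
        gcongr
        exact mul_sum_range_succ_pow_le hDp n
    _ = ((n : ℝ) + 1) ^ (p + 2) * (θ + (B + θ * D) / (n + 1)) := by
        field_simp
        ring

lemma le_mul_pow_of_convex_recurrence {u : ℕ → ℝ} {κ A B D : ℝ} (hκ : κ ∈ Set.Icc 0 1)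
    (hA : 0 ≤ A) (hB : 0 ≤ B) (hD : 0 ≤ D) (hu₀ : 0 ≤ u 0)
    (hu : ∀ n : ℕ, u (n + 1) ≤ κ * (1 + A / (n + 1)) * u n +
      (∑ l ∈ range (n + 1), (B + (1 - κ) * D * (l + 1)) * u l) / ((n : ℝ) + 1) ^ 2)
    {p : ℕ} (hp : A + B + D ≤ p) (n : ℕ) : u n ≤ u 0 * ((n : ℝ) + 1) ^ p := by
  obtain ⟨hκ₀, hκ₁⟩ := hκ
  have hθ : 0 ≤ 1 - κ := sub_nonneg.2 hκ₁
  induction n using Nat.strong_induction_on with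
  | _ n ih =>
  rcases n with - | n
  · simp
  set x : ℝ := n + 1
  have hx : 0 < x := n.cast_add_one_pos
  have hsum : ∑ l ∈ range (n + 1), (B + (1 - κ) * D * (l + 1)) * u l ≤
      u 0 * (x ^ (p + 2) * ((1 - κ) + (B + (1 - κ) * D) / x)) := by
    calc ∑ l ∈ range (n + 1), (B + (1 - κ) * D * (l + 1)) * u l
        ≤ ∑ l ∈ range (n + 1), (B + (1 - κ) * D * (l + 1)) * (u 0 * ((l : ℝ) + 1) ^ p) := by
          gcongr with l hl
          exact ih l (mem_range.1 hl)
      _ = u 0 * ∑ l ∈ range (n + 1), (B + (1 - κ) * D * (l + 1)) * ((l : ℝ) + 1) ^ p := by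
          rw [mul_sum]
          exact sum_congr rfl fun l _ => by ring
      _ ≤ _ := by
          gcongr
          exact sum_affine_mul_pow_le hB hθ (by linarith) n
  have hweights : κ * A + B + (1 - κ) * D ≤ p := by
    nlinarith [mul_nonneg hθ hA, mul_nonneg hκ₀ hD]
  have bernoulli : 1 + p / x ≤ (1 + 1 / x) ^ p := by
    simpa [div_eq_mul_inv] using one_add_mul_le_pow (a := 1 / x) (by linarith [one_div_pos.2 hx]) p
  calc u (n + 1)
      ≤ κ * (1 + A / x) * (u 0 * x ^ p) +
          u 0 * (x ^ (p + 2) * ((1 - κ) + (B + (1 - κ) * D) / x)) / x ^ 2 := by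
        refine (hu n).trans ?_
        gcongr
        exact ih n n.lt_succ_self
    _ = u 0 * x ^ p * (1 + (κ * A + B + (1 - κ) * D) / x) := by
        field_simp
        ring
    _ ≤ u 0 * x ^ p * (1 + 1 / x) ^ p := by
        gcongr
        exact le_trans (by gcongr) bernoulli
    _ = u 0 * (((n + 1 : ℕ) : ℝ) + 1) ^ p := by
        rw [mul_assoc, ← mul_pow, mul_add, mul_one, mul_one_div_cancel hx.ne', Nat.cast_succ]

variable {𝕜 : Type*} [RCLike 𝕜]

lemma norm_natCast_add_one (n : ℕ) : ‖(n : 𝕜) + 1‖ = n + 1 := by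
  exact_mod_cast RCLike.norm_natCast (K := 𝕜) (n + 1)

lemma exists_natCast_add_one_le_mul_norm {γ : 𝕜} (hγ : ∀ j : ℕ, γ ≠ -(j : 𝕜)) :
    ∃ M : ℝ, 0 ≤ M ∧ ∀ n : ℕ, (n : ℝ) + 1 ≤ M * ‖γ + n‖ := by
  have hlim : Tendsto (fun n : ℕ => ‖(γ + n)⁻¹‖) atTop (nhds ‖(0 : 𝕜)‖) :=
    (tendsto_inv₀_cobounded.comp ((tendsto_const_add_cobounded γ).comp
      tendsto_natCast_atTop_cobounded)).norm
  obtain ⟨r, hr⟩ := hlim.bddAbove_range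
  replace hr (n : ℕ) : ‖(γ + n)⁻¹‖ ≤ r := hr ⟨n, rfl⟩
  have hr₀ : 0 ≤ r := (norm_nonneg _).trans (hr 0)
  refine ⟨1 + r * ‖γ - 1‖, by positivity, fun n => ?_⟩
  have hγn : 0 < ‖γ + n‖ := norm_pos_iff.2 (mt eq_neg_of_add_eq_zero_left (hγ n))
  have hr_mul : 1 ≤ r * ‖γ + n‖ := by
    simpa [inv_le_iff_one_le_mul₀ hγn] using hr n
  calc (n : ℝ) + 1 = ‖(γ + n) - (γ - 1)‖ := by
        rw [add_sub_sub_cancel, norm_natCast_add_one]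
    _ ≤ ‖γ + n‖ + 1 * ‖γ - 1‖ := by simpa using norm_sub_le (γ + n) (γ - 1)
    _ ≤ ‖γ + n‖ + r * ‖γ + n‖ * ‖γ - 1‖ := by gcongr
    _ = (1 + r * ‖γ - 1‖) * ‖γ + n‖ := by ring

lemma exists_norm_add_mul_norm_add_le {γ : 𝕜} (hγ : ∀ j : ℕ, γ ≠ -(j : 𝕜)) (α β : 𝕜) :
    ∃ A : ℝ, 0 ≤ A ∧
      ∀ n : ℕ, ‖α + n‖ * ‖β + n‖ ≤ (1 + A / (n + 1)) * ((n + 1) * ‖γ + n‖) := by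
  obtain ⟨M, hM₀, hM⟩ := exists_natCast_add_one_le_mul_norm hγ
  set a := M * ‖α - γ‖
  set b := ‖β - 1‖
  refine ⟨a + b + a * b, by positivity, fun n => ?_⟩
  set x : ℝ := n + 1
  have hx : 1 ≤ x := le_add_of_nonneg_left n.cast_nonneg
  have hα : ‖α + n‖ ≤ (1 + a / x) * ‖γ + n‖ := by
    calc ‖α + n‖ ≤ ‖γ + n‖ + 1 * ‖α - γ‖ := by
          rw [one_mul, ← add_sub_cancel γ α, add_right_comm, add_sub_cancel]
          exact norm_add_le _ _
      _ ≤ ‖γ + n‖ + M * ‖γ + n‖ / x * ‖α - γ‖ := by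
        gcongr
        exact (one_le_div (by positivity)).2 (hM n)
      _ = (1 + a / x) * ‖γ + n‖ := by simp only [a]; ring
  have hβ : ‖β + n‖ ≤ (1 + b / x) * x := by
    calc ‖β + n‖ = ‖((n : 𝕜) + 1) + (β - 1)‖ := by rw [add_add_sub_cancel, add_comm]
      _ ≤ x + b := (norm_add_le _ _).trans_eq (by rw [norm_natCast_add_one])
      _ = (1 + b / x) * x := by field_simp
  have hab : a * b / x ^ 2 ≤ a * b / x := by
    gcongr
    exact le_self_pow₀ hx two_ne_zero
  calc ‖α + n‖ * ‖β + n‖ ≤ (1 + a / x) * ‖γ + n‖ * ((1 + b / x) * x) := by gcongr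
    _ = (1 + (a + b) / x + a * b / x ^ 2) * (x * ‖γ + n‖) := by field_simp; ring
    _ ≤ (1 + (a + b) / x + a * b / x) * (x * ‖γ + n‖) := by gcongr
    _ = (1 + (a + b + a * b) / x) * (x * ‖γ + n‖) := by ring

lemma norm_affine_weight_le {κ : ℝ} (hκ : κ ≤ 1) (δ w : 𝕜) (l : ℕ) :
    ‖w - (1 - (κ : 𝕜)) * δ * l‖ ≤ ‖w‖ + (1 - κ) * ‖δ‖ * (l + 1) := by
  have hθ : 0 ≤ 1 - κ := sub_nonneg.2 hκ
  have hnorm : ‖1 - (κ : 𝕜)‖ = 1 - κ := by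
    rw [← RCLike.ofReal_one, ← RCLike.ofReal_sub, RCLike.norm_of_nonneg hθ]
  calc ‖w - (1 - (κ : 𝕜)) * δ * l‖ ≤ ‖w‖ + (1 - κ) * ‖δ‖ * l := by
        simpa [hnorm] using norm_sub_le w ((1 - (κ : 𝕜)) * δ * l)
    _ ≤ ‖w‖ + (1 - κ) * ‖δ‖ * (l + 1) := by
        gcongr
        exact le_add_of_nonneg_right zero_le_one

lemma norm_succ_le_of_heun_recurrence {κ : ℝ} (hκ : κ ∈ Set.Icc 0 1) {α β γ δ w : 𝕜}
    {c : ℕ → 𝕜} {n : ℕ}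
    (hc : ((n : 𝕜) + 1) * (γ + n) * c (n + 1) =
      κ * (α + n) * (β + n) * c n - ∑ l ∈ range (n + 1), (w - (1 - κ) * δ * l) * c l) :
    ((n : ℝ) + 1) * ‖γ + n‖ * ‖c (n + 1)‖ ≤ κ * (‖α + n‖ * ‖β + n‖) * ‖c n‖ +
      ∑ l ∈ range (n + 1), (‖w‖ + (1 - κ) * ‖δ‖ * (l + 1)) * ‖c l‖ := by
  calc ((n : ℝ) + 1) * ‖γ + n‖ * ‖c (n + 1)‖ = ‖((n : 𝕜) + 1) * (γ + n) * c (n + 1)‖ := by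
        rw [norm_mul, norm_mul, norm_natCast_add_one]
    _ ≤ κ * (‖α + n‖ * ‖β + n‖) * ‖c n‖ +
          ∑ l ∈ range (n + 1), ‖w - (1 - (κ : 𝕜)) * δ * l‖ * ‖c l‖ := by
        rw [hc]
        refine (norm_sub_le _ _).trans (add_le_add (le_of_eq ?_) ?_)
        · simp only [norm_mul, RCLike.norm_of_nonneg hκ.1, mul_assoc]
        · simpa only [norm_mul] using
            norm_sum_le (range (n + 1)) fun l => (w - (1 - (κ : 𝕜)) * δ * l) * c l
    _ ≤ _ := by
        gcongr with l
        exact norm_affine_weight_le hκ.2 δ w l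

lemma exists_norm_le_mul_pow_of_heun_recurrence {κ : ℝ} (hκ : κ ∈ Set.Icc 0 1) {α β γ δ w : 𝕜}
    (hγ : ∀ j : ℕ, γ ≠ -(j : 𝕜)) {c : ℕ → 𝕜}
    (hc : ∀ n : ℕ, ((n : 𝕜) + 1) * (γ + n) * c (n + 1) =
      κ * (α + n) * (β + n) * c n - ∑ l ∈ range (n + 1), (w - (1 - κ) * δ * l) * c l) :
    ∃ p : ℕ, ∀ n : ℕ, ‖c n‖ ≤ ‖c 0‖ * ((n : ℝ) + 1) ^ p := by
  obtain ⟨M, hM₀, hM⟩ := exists_natCast_add_one_le_mul_norm hγ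
  obtain ⟨A, hA₀, hA⟩ := exists_norm_add_mul_norm_add_le hγ α β
  have hκ₀ : 0 ≤ κ := hκ.1
  have hθ : 0 ≤ 1 - κ := sub_nonneg.2 hκ.2
  obtain ⟨p, hp⟩ := exists_nat_ge (A + M * ‖w‖ + M * ‖δ‖)
  refine ⟨p, le_mul_pow_of_convex_recurrence (u := fun n => ‖c n‖) hκ hA₀ (by positivity)
    (by positivity) (norm_nonneg _) (fun n => ?_) hp⟩
  set x : ℝ := n + 1
  set g := ‖γ + n‖
  have hx : 0 < x := n.cast_add_one_pos
  have hg : 0 < g := norm_pos_iff.2 (mt eq_neg_of_add_eq_zero_left (hγ n))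
  set S := ∑ l ∈ range (n + 1), (‖w‖ + (1 - κ) * ‖δ‖ * (l + 1)) * ‖c l‖ with hS
  have hstep : x * g * ‖c (n + 1)‖ ≤ κ * ((1 + A / x) * (x * g)) * ‖c n‖ + S :=
    (norm_succ_le_of_heun_recurrence hκ (hc n)).trans (by gcongr κ * ?_ * ‖c n‖ + S; exact hA n)
  calc ‖c (n + 1)‖ ≤ (κ * ((1 + A / x) * (x * g)) * ‖c n‖ + S) / (x * g) := by
        rwa [le_div_iff₀' (by positivity)]
    _ = κ * (1 + A / x) * ‖c n‖ + S / x ^ 2 * (x / g) := by field_simp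
    _ ≤ κ * (1 + A / x) * ‖c n‖ + S / x ^ 2 * M := by
        gcongr
        exact (div_le_iff₀ hg).2 (hM n)
    _ = κ * (1 + A / x) * ‖c n‖ + (∑ l ∈ range (n + 1),
          (M * ‖w‖ + (1 - κ) * (M * ‖δ‖) * (l + 1)) * ‖c l‖) / x ^ 2 := by
        rw [div_mul_eq_mul_div, hS, sum_mul]
        congr 2
        exact sum_congr rfl fun l _ => by ring

end Growth

lemma summable_mul_pow_of_norm_le_mul_pow {𝕜 : Type*} [RCLike 𝕜] {c : ℕ → 𝕜}
    {C : ℝ} {p : ℕ} (hc : ∀ n : ℕ, ‖c n‖ ≤ C * ((n : ℝ) + 1) ^ p) {z : 𝕜}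
    (hz : ‖z‖ < 1) : Summable fun n => c n * z ^ n := by
  have hC : 0 ≤ C := by simpa using (norm_nonneg _).trans (hc 0)
  have hO : c =O[atTop] fun n => ((n ^ p : ℕ) : 𝕜) := by
    refine .of_bound (C * 2 ^ p) ?_
    filter_upwards [eventually_ge_atTop 1] with n hn
    have hn' : (1 : ℝ) ≤ n := Nat.one_le_cast.2 hn
    calc ‖c n‖ ≤ C * ((n : ℝ) + 1) ^ p := hc n
      _ ≤ C * (2 * n) ^ p := by gcongr; linarith
      _ = C * 2 ^ p * ‖((n ^ p : ℕ) : 𝕜)‖ := by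
        rw [RCLike.norm_natCast, Nat.cast_pow, mul_pow, mul_assoc]
  exact (summable_norm_mul_geometric_of_norm_lt_one' hz hO).of_norm

theorem heun_coefficients_polynomial_growth_general {k : ℝ} (hk₀ : k ≠ 0) (hk₁ : |k| ≤ 1)
    {α β γ δ w : ℂ} (hα : ∀ j : ℕ, α ≠ -(j : ℂ)) (hβ : ∀ j : ℕ, β ≠ -(j : ℂ))
    (hγ : ∀ j : ℕ, γ ≠ -(j : ℂ)) :
    (∃ C : ℝ, 0 < C ∧ ∃ p : ℝ, 0 ≤ p ∧
      ∀ n : ℕ, ‖heunc k α β γ δ w n‖ ≤ C * ((n : ℝ) + 1) ^ p) ∧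
    ∀ z : ℂ, ‖z‖ < 1 → Summable fun n : ℕ => heunc k α β γ δ w n * z ^ n := by
  have hκ : k ^ 2 ∈ Set.Icc 0 1 := ⟨sq_nonneg k, (sq_le_one_iff_abs_le_one k).2 hk₁⟩
  obtain ⟨p, hp⟩ := exists_norm_le_mul_pow_of_heun_recurrence hκ hγ fun n => by
    simpa using heunc_succ (δ := δ) (w := w) hk₀ hα hβ hγ n
  rw [heunc_zero hk₀, norm_one] at hp
  exact ⟨⟨1, one_pos, p, p.cast_nonneg, by simpa only [Real.rpow_natCast] using hp⟩,
    fun z hz => summable_mul_pow_of_norm_le_mul_pow hp hz⟩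

/-- The coefficients `c_n` grow at most polynomially, and consequently the power
series `Σ c_n zⁿ` converges in the open unit disk. -/
theorem heun_coefficients_polynomial_growth (k : ℝ) (hk0 : 0 < k) (hk1 : k < 1)
    (α β γ δ w : ℂ)
    (hα : ∀ j : ℕ, α ≠ -(j : ℂ)) (hβ : ∀ j : ℕ, β ≠ -(j : ℂ))
    (hγ : ∀ j : ℕ, γ ≠ -(j : ℂ)) :
    (∃ C : ℝ, 0 < C ∧ ∃ p : ℝ, 0 ≤ p ∧
      ∀ n : ℕ, ‖heunc k α β γ δ w n‖ ≤ C * ((n : ℝ) + 1) ^ p) ∧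
    ∀ z : ℂ, ‖z‖ < 1 → Summable fun n : ℕ => heunc k α β γ δ w n * z ^ n :=
  heun_coefficients_polynomial_growth_general hk0.ne' (abs_le.2 ⟨by linarith, hk1.le⟩) hα hβ hγ
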